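/- Assume the standing assumptions (B) and, for each ε ∈ (0,1), let u^ε ∈ C(Q̄) ∩ C^{2,1}(Q) be a classical solution of (QL) with the boundary condition (BC). Then for any δ > 0 there exist λ₀ > 0 and ε₀ ∈ (0,1) such that |u^ε(0,t) − g(0)| ≤ δ for all t ∈ [0, exp(λ₀/ε)] and all ε ∈ (0,ε₀). -/

import Mathlib

open Set Filter Metric Topology
open scoped ENNReal

noncomputable section

/-- `n`-dimensional Euclidean space. -/
abbrev Eu (n : ℕ) := EuclideanSpace ℝ (Fin n)

variable {n : ℕ}

/-- Euclidean dot product. -/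
def dotp (x y : Eu n) : ℝ := ∑ i, x i * y i

/-- The quadratic form `A p · p` of a matrix `A`. -/
def mquad (A : Matrix (Fin n) (Fin n) ℝ) (p : Eu n) : ℝ := ∑ i, ∑ j, A i j * p i * p j

/-- `A ∈ 𝕊ⁿ(θ)`: symmetric with `θ I ≤ A ≤ θ⁻¹ I`. -/
def memS (θ : ℝ) (A : Matrix (Fin n) (Fin n) ℝ) : Prop :=
  A.IsSymm ∧ ∀ p : Eu n, θ * ‖p‖ ^ 2 ≤ mquad A p ∧ mquad A p ≤ θ⁻¹ * ‖p‖ ^ 2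

/-- order of symmetric matrices (via quadratic forms). -/
def mle (A B : Matrix (Fin n) (Fin n) ℝ) : Prop := ∀ p : Eu n, mquad A p ≤ mquad B p

/-- trace of the product `A·H`. -/
def trMul (A H : Matrix (Fin n) (Fin n) ℝ) : ℝ := ∑ i, ∑ j, A i j * H j i

/-- the Pucci maximal operator associated with `𝕊ⁿ(θ)`. -/
def pucci (θ : ℝ) (X : Matrix (Fin n) (Fin n) ℝ) : ℝ :=
  sSup ((fun A => trMul A X) '' {A | memS θ A})

/-- time derivative of `u(x,t)`. -/
def tD (u : Eu n → ℝ → ℝ) (x : Eu n) (t : ℝ) : ℝ := deriv (u x) t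

/-- spatial gradient of `u(x,t)`. -/
def sG (u : Eu n → ℝ → ℝ) (x : Eu n) (t : ℝ) : Eu n := gradient (fun y => u y t) x

/-- spatial Hessian matrix of `u(x,t)`. -/
def sH (u : Eu n → ℝ → ℝ) (x : Eu n) (t : ℝ) : Matrix (Fin n) (Fin n) ℝ :=
  fun i j => fderiv ℝ (fun y => sG u y t i) x (EuclideanSpace.single j 1)

/-- Hessian matrix of a static function. -/
def hessS (v : Eu n → ℝ) (x : Eu n) : Matrix (Fin n) (Fin n) ℝ :=
  fun i j => fderiv ℝ (fun y => gradient v y i) x (EuclideanSpace.single j 1)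

/-- closed parabolic cylinder `Q̄_T = closure Ω × [0,T]` (with `T ∈ (0,∞]`). -/
def cylC (Ω : Set (Eu n)) (T : ℝ≥0∞) : Set (Eu n × ℝ) :=
  {p | p.1 ∈ closure Ω ∧ 0 ≤ p.2 ∧ ENNReal.ofReal p.2 ≤ T}

/-- open parabolic cylinder `Q_T = Ω × (0,T)`. -/
def cylO (Ω : Set (Eu n)) (T : ℝ≥0∞) : Set (Eu n × ℝ) :=
  {p | p.1 ∈ Ω ∧ 0 < p.2 ∧ ENNReal.ofReal p.2 < T}

/-- `u ∈ C^{2,1}(Q_T)`. -/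
def C21 (u : Eu n → ℝ → ℝ) (Ω : Set (Eu n)) (T : ℝ≥0∞) : Prop :=
  (∀ x ∈ Ω, ∀ t : ℝ, 0 < t → ENNReal.ofReal t < T →
     ContDiffAt ℝ 2 (fun y => u y t) x ∧ DifferentiableAt ℝ (u x) t) ∧
  ContinuousOn (fun p : Eu n × ℝ => tD u p.1 p.2) (cylO Ω T) ∧
  ContinuousOn (fun p : Eu n × ℝ => sH u p.1 p.2) (cylO Ω T)

/-- `u ∈ C(Q̄_T) ∩ C^{2,1}(Q_T)`. -/
def Classical21 (u : Eu n → ℝ → ℝ) (Ω : Set (Eu n)) (T : ℝ≥0∞) : Prop :=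
  ContinuousOn (fun p : Eu n × ℝ => u p.1 p.2) (cylC Ω T) ∧ C21 u Ω T

/-- a coefficient field in `C(Q̄_T; 𝕊ⁿ(θ))`. -/
def MatC (θ : ℝ) (A : Eu n → ℝ → Matrix (Fin n) (Fin n) ℝ) (Ω : Set (Eu n))
    (T : ℝ≥0∞) : Prop :=
  ContinuousOn (fun p : Eu n × ℝ => A p.1 p.2) (cylC Ω T) ∧
  ∀ p ∈ cylC Ω T, memS θ (A p.1 p.2)

/-- `u` is a classical solution of `u_t = ε tr[A D²u] + b·Du` in `Q_T`. -/
def SolveL (ε : ℝ) (A : Eu n → ℝ → Matrix (Fin n) (Fin n) ℝ) (b : Eu n → Eu n)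
    (u : Eu n → ℝ → ℝ) (Ω : Set (Eu n)) (T : ℝ≥0∞) : Prop :=
  ∀ x ∈ Ω, ∀ t : ℝ, 0 < t → ENNReal.ofReal t < T →
    tD u x t = ε * trMul (A x t) (sH u x t) + dotp (b x) (sG u x t)

/-- `u` is a classical subsolution of `(L)` in `Q_T`. -/
def SubsolL (ε : ℝ) (A : Eu n → ℝ → Matrix (Fin n) (Fin n) ℝ) (b : Eu n → Eu n)
    (u : Eu n → ℝ → ℝ) (Ω : Set (Eu n)) (T : ℝ≥0∞) : Prop :=
  ∀ x ∈ Ω, ∀ t : ℝ, 0 < t → ENNReal.ofReal t < T →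
    tD u x t ≤ ε * trMul (A x t) (sH u x t) + dotp (b x) (sG u x t)

/-- `u` is a classical supersolution of `(L)` in `Q_T`. -/
def SupersolL (ε : ℝ) (A : Eu n → ℝ → Matrix (Fin n) (Fin n) ℝ) (b : Eu n → Eu n)
    (u : Eu n → ℝ → ℝ) (Ω : Set (Eu n)) (T : ℝ≥0∞) : Prop :=
  ∀ x ∈ Ω, ∀ t : ℝ, 0 < t → ENNReal.ofReal t < T →
    ε * trMul (A x t) (sH u x t) + dotp (b x) (sG u x t) ≤ tD u x t

/-- viscosity subsolution of `H(x,Du) = 0` on `A`. -/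
def ViscSub (H : Eu n → Eu n → ℝ) (A : Set (Eu n)) (u : Eu n → ℝ) : Prop :=
  ∀ φ : Eu n → ℝ, ContDiff ℝ 1 φ → ∀ x ∈ A,
    IsLocalMaxOn (fun y => u y - φ y) A x → H x (gradient φ x) ≤ 0

/-- viscosity supersolution of `H(x,Du) = 0` on `A`. -/
def ViscSup (H : Eu n → Eu n → ℝ) (A : Set (Eu n)) (u : Eu n → ℝ) : Prop :=
  ∀ φ : Eu n → ℝ, ContDiff ℝ 1 φ → ∀ x ∈ A,
    IsLocalMinOn (fun y => u y - φ y) A x → 0 ≤ H x (gradient φ x)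

/-- the Hamiltonian `H_α(x,p) = α(x) p·p + b(x)·p`. -/
def Ham (α : Eu n → Matrix (Fin n) (Fin n) ℝ) (b : Eu n → Eu n) (x p : Eu n) : ℝ :=
  mquad (α x) p + dotp (b x) p

/-- the quasi-potential `V_α`: the pointwise supremum (= maximal element) of all
Lipschitz viscosity subsolutions of `H_α(x,Du)=0` in `Ω` vanishing at the origin. -/
def Vq (α : Eu n → Matrix (Fin n) (Fin n) ℝ) (b : Eu n → Eu n) (Ω : Set (Eu n))
    (x : Eu n) : ℝ :=
  sSup {r | ∃ u : Eu n → ℝ, (∃ K : NNReal, LipschitzOnWith K u (closure Ω)) ∧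
    u 0 = 0 ∧ ViscSub (Ham α b) Ω u ∧ r = u x}

/-- `M_α = min_{∂Ω} V_α`. -/
def Mq (α : Eu n → Matrix (Fin n) (Fin n) ℝ) (b : Eu n → Eu n) (Ω : Set (Eu n)) : ℝ :=
  sInf (Vq α b Ω '' frontier Ω)

/-- `argmin (V_α | ∂Ω)`. -/
def argminV (α : Eu n → Matrix (Fin n) (Fin n) ℝ) (b : Eu n → Eu n)
    (Ω : Set (Eu n)) : Set (Eu n) :=
  {x ∈ frontier Ω | ∀ y ∈ frontier Ω, Vq α b Ω x ≤ Vq α b Ω y}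

/-- `Σ_α^m = {x ∈ Ω̄ : V_α(x) ≤ m}`. -/
def SigmaM (α : Eu n → Matrix (Fin n) (Fin n) ℝ) (b : Eu n → Eu n) (Ω : Set (Eu n))
    (m : ℝ) : Set (Eu n) :=
  {x ∈ closure Ω | Vq α b Ω x ≤ m}

/-- `Ω` is a bounded `C¹` domain with outward unit normal `ν`. -/
def IsBdC1With (Ω : Set (Eu n)) (ν : Eu n → Eu n) : Prop :=
  IsOpen Ω ∧ Bornology.IsBounded Ω ∧
  ∃ ρ : Eu n → ℝ, ContDiff ℝ 1 ρ ∧ Ω = {x | ρ x < 0} ∧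
    ∀ x ∈ frontier Ω, gradient ρ x ≠ 0 ∧ ν x = ‖gradient ρ x‖⁻¹ • gradient ρ x

/-- `X` is the flow of `b`, and the origin is globally asymptotically stable. -/
def GAS (b : Eu n → Eu n) (X : ℝ → Eu n → Eu n) : Prop :=
  (∀ x, X 0 x = x) ∧ (∀ x t, HasDerivAt (fun s => X s x) (b (X t x)) t) ∧
  (∀ x, Tendsto (fun t => X t x) atTop (nhds 0)) ∧
  (∀ ε > (0:ℝ), ∃ δ > (0:ℝ), ∀ x : Eu n, ‖x‖ < δ → ∀ t ≥ (0:ℝ), ‖X t x‖ < ε)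

/-- `Ω_δ = {x ∈ Ω : dist(x,∂Ω) > δ}`. -/
def Omd (Ω : Set (Eu n)) (δ : ℝ) : Set (Eu n) := {x ∈ Ω | δ < infDist x (frontier Ω)}

/-- `Ω^Π_δ = {x ∈ Ω̄ : dist(x, ∂Ω \ Π) > δ}`. -/
def OmPid (Ω Pset : Set (Eu n)) (δ : ℝ) : Set (Eu n) :=
  {x ∈ closure Ω | δ < infDist x (frontier Ω \ Pset)}

/-- the standing assumptions (B). -/
structure SettingB (n : ℕ) where
  Ω : Set (Eu n)
  ν : Eu n → Eu n
  g : Eu n → ℝ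
  θ₀ : ℝ
  a : Eu n → ℝ → Matrix (Fin n) (Fin n) ℝ
  b : Eu n → Eu n
  b₀ : ℝ
  r₀ : ℝ
  θ₀_mem : θ₀ ∈ Set.Ioc (0 : ℝ) 1
  domain : IsBdC1With Ω ν
  zero_mem : (0 : Eu n) ∈ Ω
  g_cont : ContinuousOn g (closure Ω)
  a_cont : ContinuousOn (fun p : Eu n × ℝ => a p.1 p.2) (closure Ω ×ˢ Set.univ)
  a_mem : ∀ x ∈ closure Ω, ∀ c : ℝ, memS θ₀ (a x c)
  b_lip : ∃ K : NNReal, LipschitzWith K b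
  b_zero : b 0 = 0
  b_gas : ∃ X : ℝ → Eu n → Eu n, GAS b X
  b_inward : ∀ x ∈ frontier Ω, dotp (b x) (ν x) < 0
  b₀_pos : 0 < b₀
  r₀_pos : 0 < r₀
  ball_sub : closedBall (0 : Eu n) r₀ ⊆ Ω
  b_coerc : ∀ x ∈ ball (0 : Eu n) r₀, dotp (b x) x ≤ -b₀ * ‖x‖ ^ 2

namespace SettingB

variable (S : SettingB n)

/-- the quasi-potential `V^c` associated with `(a(·,c), b)`. -/
def Vc (c : ℝ) : Eu n → ℝ := Vq (fun x => S.a x c) S.b S.Ω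

/-- `M(c) = min_{∂Ω} V^c`. -/
def M (c : ℝ) : ℝ := sInf (S.Vc c '' frontier S.Ω)

/-- `G(c) = {g(x) : x ∈ argmin(V^c|∂Ω)}`. -/
def Gset (c : ℝ) : Set ℝ := S.g '' argminV (fun x => S.a x c) S.b S.Ω

/-- `G⁺(c) = max G(c)`. -/
def Gp (c : ℝ) : ℝ := sSup (S.Gset c)

/-- `G⁻(c) = min G(c)`. -/
def Gm (c : ℝ) : ℝ := sInf (S.Gset c)

/-- `c₀ = g(0)`. -/
def c0 : ℝ := S.g 0

/-- `g_min = min_{Ω̄} g`. -/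
def gmin : ℝ := sInf (S.g '' closure S.Ω)

/-- `g_max = max_{Ω̄} g`. -/
def gmax : ℝ := sSup (S.g '' closure S.Ω)

/-- the crossing value `c₁`. -/
def c1 : ℝ :=
  if S.c0 ≤ S.Gp S.c0 then sInf {c | S.c0 ≤ c ∧ S.Gm c ≤ c}
  else sSup {c | c ≤ S.c0 ∧ c ≤ S.Gp c}

/-- the function `c̄ : (0,∞) → I_g`. -/
def cbar (l : ℝ) : ℝ :=
  if l < S.M S.c0 ∨ S.c1 = S.c0 then S.c0
  else if S.c0 < S.c1 then min S.c1 (sInf {c | c ∈ Set.Icc S.c0 S.c1 ∧ S.M c = l})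
  else max S.c1 (sSup {c | c ∈ Set.Icc S.c1 S.c0 ∧ S.M c = l})

/-- assumption (FK13): `G⁺(c₀) = G⁻(c₀)`. -/
def FK13 : Prop := S.Gp S.c0 = S.Gm S.c0

/-- assumption (FK12). -/
def FK12 : Prop :=
  ∀ δ₀ > (0:ℝ), ∃ δ ∈ Set.Ioc (0:ℝ) δ₀,
    (S.c1 ≤ S.c0 ∧ S.gmin < S.c1 → S.c1 - δ < S.Gm (S.c1 - δ)) ∧
    (S.c0 ≤ S.c1 ∧ S.c1 < S.gmax → S.Gp (S.c1 + δ) < S.c1 + δ)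

/-- `u` is a classical (`C(Q̄) ∩ C^{2,1}(Q)`) solution of the quasi-linear equation (QL). -/
def SolvesQL (ε : ℝ) (u : Eu n → ℝ → ℝ) : Prop :=
  Classical21 u S.Ω ⊤ ∧ SolveL ε (fun x t => S.a x (u x t)) S.b u S.Ω ⊤

/-- the boundary condition (BC): `u = g` on the parabolic boundary of `Q`. -/
def BC (u : Eu n → ℝ → ℝ) : Prop :=
  (∀ x ∈ closure S.Ω, u x 0 = S.g x) ∧ ∀ x ∈ frontier S.Ω, ∀ t > (0:ℝ), u x t = S.g x

end SettingB

/-!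
The matrix field `a(x, u(x, t))` is frozen, so that `u` and `-u` both solve a linear parabolic
equation and only an upper bound is needed. Near the origin the drift satisfies
`b(x) · x ≤ -b₀ |x|²`, and for `κ = b₀ θ / (4 ε)` the function `c + η t + m exp (κ |x|²)` is a
supersolution in a small ball `B_r` as soon as `η` is a fixed multiple of `m`. Taking `c` slightly
above `g(0)` and `m` a multiple of `exp (-κ r²)`, it lies above `u` on the parabolic boundary of the
cylinder over `B_r`, whereas at the origin it is `c + O(exp (-κ r²) (1 + t))`, which stays close to
`c` for all `t ≤ exp (κ r² / 2)`.
-/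

section Calculus

lemma deriv_deriv_nonpos_of_isLocalMax {f : ℝ → ℝ} {x : ℝ} (hc : ContinuousAt f x)
    (hm : IsLocalMax f x) : deriv (deriv f) x ≤ 0 := by
  by_contra! hpos
  have hmin : IsLocalMin f x := isLocalMin_of_deriv_deriv_pos hpos hm.deriv_eq_zero hc
  have hconst : f =ᶠ[𝓝 x] fun _ => f x := by
    filter_upwards [hm, hmin] with y hle hge using le_antisymm hle hge
  have hzero : deriv (deriv f) x = 0 := by simpa using hconst.deriv.deriv_eq
  exact hpos.ne' hzero

lemma nonneg_of_hasDerivAt_of_eventually_le_left {f : ℝ → ℝ} {f' t : ℝ} (hf : HasDerivAt f f' t)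
    (hle : ∀ᶠ s in 𝓝[<] t, f s ≤ f t) : 0 ≤ f' := by
  refine ge_of_tendsto (hasDerivAt_iff_tendsto_slope_left_right.1 hf).1 ?_
  filter_upwards [hle, self_mem_nhdsWithin] with s hs hst
  rw [slope_def_field]
  exact div_nonneg_of_nonpos (sub_nonpos.2 hs) (sub_nonpos.2 (le_of_lt hst))

variable {E : Type*} [NormedAddCommGroup E] [NormedSpace ℝ E]

lemma hasDerivAt_add_smul (x p : E) (s : ℝ) : HasDerivAt (fun s : ℝ => x + s • p) p s := by
  simpa using ((hasDerivAt_id s).smul_const p).const_add x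

lemma tendsto_add_smul_nhds_zero (x p : E) : Tendsto (fun s : ℝ => x + s • p) (𝓝 0) (𝓝 x) := by
  simpa using (hasDerivAt_add_smul x p 0).continuousAt.tendsto

lemma hasDerivAt_deriv_comp_add_smul {f : E → ℝ} {x : E} (hf : ContDiffAt ℝ 2 f x) (p : E) :
    HasDerivAt (deriv fun s : ℝ => f (x + s • p)) (fderiv ℝ (fderiv ℝ f) x p p) 0 := by
  have hfst : ∀ᶠ s in 𝓝 (0 : ℝ),
      deriv (fun s : ℝ => f (x + s • p)) s = fderiv ℝ f (x + s • p) p := by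
    filter_upwards [(tendsto_add_smul_nhds_zero x p).eventually (hf.eventually (by simp))] with s hs
    exact ((hs.differentiableAt (by simp)).hasFDerivAt.comp_hasDerivAt s
      (hasDerivAt_add_smul x p s)).deriv
  have hsnd : HasFDerivAt (fderiv ℝ f) (fderiv ℝ (fderiv ℝ f) x) (x + (0 : ℝ) • p) := by
    simpa using ((hf.fderiv_right (m := 1) le_rfl).differentiableAt (by simp)).hasFDerivAt
  have hfderiv : HasDerivAt (fun s : ℝ => fderiv ℝ f (x + s • p))
      (fderiv ℝ (fderiv ℝ f) x p) 0 :=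
    hsnd.comp_hasDerivAt 0 (hasDerivAt_add_smul x p 0)
  have hline : HasDerivAt (fun s : ℝ => fderiv ℝ f (x + s • p) p)
      (fderiv ℝ (fderiv ℝ f) x p p) 0 := by
    simpa using hfderiv.clm_apply (hasDerivAt_const (0 : ℝ) p)
  exact hline.congr_of_eventuallyEq hfst

lemma fderiv_fderiv_apply_apply_nonpos_of_isLocalMax {f : E → ℝ} {x : E}
    (hf : ContDiffAt ℝ 2 f x) (hm : IsLocalMax f x) (p : E) :
    fderiv ℝ (fderiv ℝ f) x p p ≤ 0 := by
  have htendsto := tendsto_add_smul_nhds_zero x p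
  rw [← (hasDerivAt_deriv_comp_add_smul hf p).deriv]
  apply deriv_deriv_nonpos_of_isLocalMax
  · simpa [ContinuousAt, Function.comp_def] using hf.continuousAt.tendsto.comp htendsto
  · filter_upwards [htendsto.eventually hm] with s hs
    simpa using hs

end Calculus

section Matrices

lemma dotp_eq_inner (x y : Eu n) : dotp x y = inner ℝ x y := by
  simp [dotp, PiLp.inner_apply, mul_comm]

lemma memS.posSemidef {θ : ℝ} {A : Matrix (Fin n) (Fin n) ℝ} (hA : memS θ A) (hθ : 0 ≤ θ) :
    A.PosSemidef := by
  refine .of_dotProduct_mulVec_nonneg ?_ fun x => ?_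
  · rw [Matrix.IsHermitian, Matrix.conjTranspose_eq_transpose_of_trivial]
    exact hA.1
  · have hquad : 0 ≤ mquad A (WithLp.toLp 2 x) := le_trans (by positivity) (hA.2 _).1
    refine hquad.trans_eq ?_
    simp only [mquad, dotProduct, Matrix.mulVec, Finset.mul_sum, star_trivial]
    exact Finset.sum_congr rfl fun i _ => Finset.sum_congr rfl fun j _ => by ring

lemma memS.trace_le {θ : ℝ} {A : Matrix (Fin n) (Fin n) ℝ} (hA : memS θ A) :
    A.trace ≤ n * θ⁻¹ := by
  have hdiag : ∀ i, A i i ≤ θ⁻¹ := fun i => by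
    simpa [mquad, Pi.single_apply] using (hA.2 (EuclideanSpace.single i 1)).2
  calc A.trace ≤ ∑ _i : Fin n, θ⁻¹ := Finset.sum_le_sum fun i _ => hdiag i
    _ = n * θ⁻¹ := by simp

lemma trMul_conjTranspose_mul_self (B H : Matrix (Fin n) (Fin n) ℝ) :
    trMul (B.conjTranspose * B) H = ∑ k, mquad H (WithLp.toLp 2 (B k)) := by
  simp only [trMul, mquad, Matrix.mul_apply, Matrix.conjTranspose_apply, star_trivial,
    Finset.sum_mul]
  rw [Finset.sum_comm_cycle]
  refine Finset.sum_congr rfl fun k _ => ?_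
  rw [Finset.sum_comm]
  exact Finset.sum_congr rfl fun i _ => Finset.sum_congr rfl fun j _ => by ring

open scoped MatrixOrder in
lemma trMul_nonpos {A H : Matrix (Fin n) (Fin n) ℝ} (hA : A.PosSemidef)
    (hH : ∀ p : Eu n, mquad H p ≤ 0) : trMul A H ≤ 0 := by
  obtain ⟨B, rfl⟩ : ∃ B : Matrix (Fin n) (Fin n) ℝ, A = B.conjTranspose * B :=
    CStarAlgebra.nonneg_iff_eq_star_mul_self.mp hA.nonneg
  rw [trMul_conjTranspose_mul_self]
  exact Finset.sum_nonpos fun k _ => hH _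

lemma trMul_eq_trace_mul (A H : Matrix (Fin n) (Fin n) ℝ) : trMul A H = (A * H).trace := by
  simp only [trMul, Matrix.trace, Matrix.diag_apply, Matrix.mul_apply]

lemma trMul_vecMulVec_self (A : Matrix (Fin n) (Fin n) ℝ) (x : Eu n) :
    trMul A (Matrix.vecMulVec x x) = mquad A x := by
  simp only [trMul, mquad, Matrix.vecMulVec_apply]
  exact Finset.sum_congr rfl fun i _ => Finset.sum_congr rfl fun j _ => by ring

end Matrices

section Hessian

lemma gradient_apply (f : Eu n → ℝ) (x : Eu n) (i : Fin n) :
    gradient f x i = fderiv ℝ f x (EuclideanSpace.single i 1) := by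
  rw [← inner_gradient_left, EuclideanSpace.inner_single_right]
  simp

lemma dotp_gradient (f : Eu n → ℝ) (x p : Eu n) : dotp p (gradient f x) = fderiv ℝ f x p := by
  rw [dotp_eq_inner, real_inner_comm, inner_gradient_left]

lemma hessS_apply {f : Eu n → ℝ} {x : Eu n} (hf : ContDiffAt ℝ 2 f x) (i j : Fin n) :
    hessS f x i j =
      fderiv ℝ (fderiv ℝ f) x (EuclideanSpace.single j 1) (EuclideanSpace.single i 1) := by
  have hdiff : DifferentiableAt ℝ (fderiv ℝ f) x :=
    (hf.fderiv_right (m := 1) le_rfl).differentiableAt (by simp)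
  simp only [hessS, gradient_apply]
  rw [fderiv_clm_apply hdiff (by fun_prop)]
  simp

lemma mquad_hessS {f : Eu n → ℝ} {x : Eu n} (hf : ContDiffAt ℝ 2 f x) (p : Eu n) :
    mquad (hessS f x) p = fderiv ℝ (fderiv ℝ f) x p p := by
  have hp : p = ∑ i, p i • EuclideanSpace.single i (1 : ℝ) := by
    ext j
    simp [Pi.single_apply]
  conv_rhs => rw [hp]
  simp only [mquad, hessS_apply hf, map_sum, map_smul, sum_apply, smul_apply, smul_eq_mul,
    Finset.mul_sum]
  exact Finset.sum_congr rfl fun i _ => Finset.sum_congr rfl fun j _ => by ring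

lemma hessS_sub {f g : Eu n → ℝ} {x : Eu n} (hf : ContDiffAt ℝ 2 f x) (hg : ContDiffAt ℝ 2 g x) :
    hessS (fun y => f y - g y) x = hessS f x - hessS g x := by
  have hfst : fderiv ℝ (fun y => f y - g y) =ᶠ[𝓝 x] fun y => fderiv ℝ f y - fderiv ℝ g y := by
    filter_upwards [hf.eventually (by simp), hg.eventually (by simp)] with y hfy hgy
    exact fderiv_fun_sub (hfy.differentiableAt (by simp)) (hgy.differentiableAt (by simp))
  have hsnd : fderiv ℝ (fun y => fderiv ℝ f y - fderiv ℝ g y) x =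
      fderiv ℝ (fderiv ℝ f) x - fderiv ℝ (fderiv ℝ g) x :=
    fderiv_fun_sub ((hf.fderiv_right (m := 1) le_rfl).differentiableAt (by simp))
      ((hg.fderiv_right (m := 1) le_rfl).differentiableAt (by simp))
  ext i j
  rw [hessS_apply (hf.sub hg), hfst.fderiv_eq, hsnd, Matrix.sub_apply, hessS_apply hf,
    hessS_apply hg, sub_apply, sub_apply]

end Hessian

section ParabolicOperator

/-- The linear parabolic operator `u ↦ u_t - ε tr[A D²u] - b · Du`, evaluated at `(x, t)`. -/
def parabolicOp (ε : ℝ) (A : Eu n → ℝ → Matrix (Fin n) (Fin n) ℝ) (b : Eu n → Eu n)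
    (u : Eu n → ℝ → ℝ) (x : Eu n) (t : ℝ) : ℝ :=
  tD u x t - ε * trMul (A x t) (sH u x t) - dotp (b x) (sG u x t)

/-- The regularity required by the comparison principle in `Q_T`: continuity up to the boundary, and
derivatives `u_t`, `D²u` at every point. Unlike in `Classical21`, these need not be jointly
continuous in `(x, t)`. -/
structure ParabolicRegular (u : Eu n → ℝ → ℝ) (Ω : Set (Eu n)) (T : ℝ≥0∞) : Prop where
  continuousOn : ContinuousOn (fun p : Eu n × ℝ => u p.1 p.2) (cylC Ω T)
  contDiffAt : ∀ x ∈ Ω, ∀ t : ℝ, 0 < t → ENNReal.ofReal t < T →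
    ContDiffAt ℝ 2 (fun y => u y t) x
  differentiableAt : ∀ x ∈ Ω, ∀ t : ℝ, 0 < t → ENNReal.ofReal t < T →
    DifferentiableAt ℝ (u x) t

variable {ε : ℝ} {A : Eu n → ℝ → Matrix (Fin n) (Fin n) ℝ} {b : Eu n → Eu n}
  {u v : Eu n → ℝ → ℝ} {Ω U : Set (Eu n)} {T : ℝ≥0∞} {x : Eu n} {t : ℝ}

lemma Classical21.parabolicRegular (hu : Classical21 u Ω T) : ParabolicRegular u Ω T where
  continuousOn := hu.1
  contDiffAt x hx t ht htT := (hu.2.1 x hx t ht htT).1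
  differentiableAt x hx t ht htT := (hu.2.1 x hx t ht htT).2

lemma SolveL.parabolicOp_eq_zero (hu : SolveL ε A b u Ω T) (hx : x ∈ Ω) (ht : 0 < t)
    (htT : ENNReal.ofReal t < T) : parabolicOp ε A b u x t = 0 := by
  rw [parabolicOp, hu x hx t ht htT]
  ring

namespace ParabolicRegular

lemma of_contDiff (hu : ContDiff ℝ 2 fun p : Eu n × ℝ => u p.1 p.2) : ParabolicRegular u Ω T where
  continuousOn := hu.continuous.continuousOn
  contDiffAt x _ t _ _ :=
    (hu.comp (contDiff_id.prodMk contDiff_const : ContDiff ℝ 2 fun y : Eu n => (y, t))).contDiffAt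
  differentiableAt x _ t _ _ :=
    (hu.comp (contDiff_const.prodMk contDiff_id : ContDiff ℝ 2 fun s : ℝ => (x, s))).differentiable
      (by simp) t

lemma mono (hu : ParabolicRegular u Ω T) (hU : U ⊆ Ω) : ParabolicRegular u U T where
  continuousOn := hu.continuousOn.mono fun _ hp => ⟨closure_mono hU hp.1, hp.2⟩
  contDiffAt x hx := hu.contDiffAt x (hU hx)
  differentiableAt x hx := hu.differentiableAt x (hU hx)

lemma sub (hu : ParabolicRegular u Ω T) (hv : ParabolicRegular v Ω T) :
    ParabolicRegular (fun x t => u x t - v x t) Ω T where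
  continuousOn := hu.continuousOn.sub hv.continuousOn
  contDiffAt x hx t ht htT := (hu.contDiffAt x hx t ht htT).sub (hv.contDiffAt x hx t ht htT)
  differentiableAt x hx t ht htT :=
    (hu.differentiableAt x hx t ht htT).sub (hv.differentiableAt x hx t ht htT)

lemma parabolicOp_sub (hu : ParabolicRegular u Ω T) (hv : ParabolicRegular v Ω T) (hx : x ∈ Ω)
    (ht : 0 < t) (htT : ENNReal.ofReal t < T) :
    parabolicOp ε A b (fun x t => u x t - v x t) x t =
      parabolicOp ε A b u x t - parabolicOp ε A b v x t := by
  have hux := hu.contDiffAt x hx t ht htT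
  have hvx := hv.contDiffAt x hx t ht htT
  have htime : tD (fun x t => u x t - v x t) x t = tD u x t - tD v x t :=
    deriv_fun_sub (hu.differentiableAt x hx t ht htT) (hv.differentiableAt x hx t ht htT)
  have hgrad : dotp (b x) (sG (fun x t => u x t - v x t) x t) =
      dotp (b x) (sG u x t) - dotp (b x) (sG v x t) := by
    simp only [sG, dotp_gradient]
    rw [fderiv_fun_sub (hux.differentiableAt (by simp)) (hvx.differentiableAt (by simp)), sub_apply]
  have hhess : sH (fun x t => u x t - v x t) x t = sH u x t - sH v x t := hessS_sub hux hvx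
  simp only [parabolicOp, htime, hgrad, hhess, trMul_eq_trace_mul, Matrix.mul_sub,
    Matrix.trace_sub]
  ring

end ParabolicRegular

lemma parabolicOp_of_time (f : ℝ → ℝ) : parabolicOp ε A b (fun _ t => f t) x t = deriv f t := by
  simp [parabolicOp, tD, sG, sH, dotp, trMul]

lemma tD_le_parabolicOp_of_isLocalMax (hε : 0 ≤ ε) (hA : (A x t).PosSemidef)
    (hu : ContDiffAt ℝ 2 (fun y => u y t) x) (hmax : IsLocalMax (fun y => u y t) x) :
    tD u x t ≤ parabolicOp ε A b u x t := by
  have hgrad : dotp (b x) (sG u x t) = 0 := by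
    rw [sG, dotp_gradient, hmax.fderiv_eq_zero, zero_apply]
  have htrace : trMul (A x t) (sH u x t) ≤ 0 := trMul_nonpos hA fun p =>
    (mquad_hessS hu p).trans_le (fderiv_fderiv_apply_apply_nonpos_of_isLocalMax hu hmax p)
  rw [parabolicOp, hgrad]
  linarith [mul_nonpos_of_nonneg_of_nonpos hε htrace]

end ParabolicOperator

section Comparison

variable {ε : ℝ} {A : Eu n → ℝ → Matrix (Fin n) (Fin n) ℝ} {b : Eu n → Eu n}
  {u v : Eu n → ℝ → ℝ} {Ω : Set (Eu n)} {T : ℝ≥0∞}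

lemma nonpos_of_parabolicOp_neg (hΩ : IsOpen Ω) (hΩb : Bornology.IsBounded Ω) (hε : 0 ≤ ε)
    (hA : ∀ x ∈ Ω, ∀ t > 0, (A x t).PosSemidef) (hu : ParabolicRegular u Ω T)
    (hneg : ∀ x ∈ Ω, ∀ t : ℝ, 0 < t → ENNReal.ofReal t < T → parabolicOp ε A b u x t < 0)
    (hinit : ∀ x ∈ closure Ω, u x 0 ≤ 0)
    (hlat : ∀ x ∈ frontier Ω, ∀ t : ℝ, 0 < t → ENNReal.ofReal t < T → u x t ≤ 0) :
    ∀ x ∈ closure Ω, ∀ t : ℝ, 0 ≤ t → ENNReal.ofReal t < T → u x t ≤ 0 := by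
  intro x hx t ht htT
  have hsub : closure Ω ×ˢ Icc 0 t ⊆ cylC Ω T := fun p hp =>
    ⟨hp.1, hp.2.1, (ENNReal.ofReal_le_ofReal hp.2.2).trans htT.le⟩
  obtain ⟨⟨y, s⟩, ⟨hy, hs⟩, hmax⟩ := (hΩb.isCompact_closure.prod isCompact_Icc).exists_isMaxOn
    ⟨(x, t), hx, ht, le_rfl⟩ (hu.continuousOn.mono hsub)
  suffices hmaxval : u y s ≤ 0 from (hmax ⟨hx, ht, le_rfl⟩ : u x t ≤ u y s).trans hmaxval
  have hsT : ENNReal.ofReal s < T := (ENNReal.ofReal_le_ofReal hs.2).trans_lt htT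
  rcases hs.1.eq_or_lt with rfl | hspos
  · exact hinit y hy
  by_cases hyΩ : y ∈ Ω
  · have htime : 0 ≤ tD u y s := by
      refine nonneg_of_hasDerivAt_of_eventually_le_left
        (hu.differentiableAt y hyΩ s hspos hsT).hasDerivAt ?_
      filter_upwards [Ioo_mem_nhdsLT hspos] with r hr
      exact hmax (a := (y, r)) ⟨hy, hr.1.le, hr.2.le.trans hs.2⟩
    have hspace : IsLocalMax (fun z => u z s) y := by
      filter_upwards [hΩ.mem_nhds hyΩ] with z hz
      exact hmax (a := (z, s)) ⟨subset_closure hz, hs⟩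
    have hop := tD_le_parabolicOp_of_isLocalMax (b := b) hε (hA y hyΩ s hspos)
      (hu.contDiffAt y hyΩ s hspos hsT) hspace
    linarith [hneg y hyΩ s hspos hsT]
  · exact hlat y (hΩ.frontier_eq ▸ ⟨hy, hyΩ⟩) s hspos hsT

theorem le_of_parabolicOp_le (hΩ : IsOpen Ω) (hΩb : Bornology.IsBounded Ω) (hε : 0 ≤ ε)
    (hA : ∀ x ∈ Ω, ∀ t > 0, (A x t).PosSemidef)
    (hu : ParabolicRegular u Ω T) (hv : ParabolicRegular v Ω T)
    (hop : ∀ x ∈ Ω, ∀ t : ℝ, 0 < t → ENNReal.ofReal t < T →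
      parabolicOp ε A b u x t ≤ parabolicOp ε A b v x t)
    (hinit : ∀ x ∈ closure Ω, u x 0 ≤ v x 0)
    (hlat : ∀ x ∈ frontier Ω, ∀ t : ℝ, 0 < t → ENNReal.ofReal t < T → u x t ≤ v x t) :
    ∀ x ∈ closure Ω, ∀ t : ℝ, 0 ≤ t → ENNReal.ofReal t < T → u x t ≤ v x t := by
  intro x hx t ht htT
  have hperturbed : ∀ η > 0, u x t - v x t - η * t ≤ 0 := by
    intro η hη
    have hlin : ParabolicRegular (fun (_ : Eu n) s => η * s) Ω T := .of_contDiff (by fun_prop)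
    refine nonpos_of_parabolicOp_neg (b := b) (u := fun x t => u x t - v x t - η * t)
      hΩ hΩb hε hA ((hu.sub hv).sub hlin) ?_ ?_ ?_ x hx t ht htT
    · intro y hy s hs hsT
      have hderiv : deriv (fun s => η * s) s = η := by simp
      rw [(hu.sub hv).parabolicOp_sub hlin hy hs hsT, hu.parabolicOp_sub hv hy hs hsT,
        parabolicOp_of_time, hderiv]
      linarith [hop y hy s hs hsT]
    · intro y hy
      simpa using hinit y hy
    · intro y hy s hs hsT
      linarith [hlat y hy s hs hsT, mul_pos hη hs]
  have hlim : Tendsto (fun η => u x t - v x t - η * t) (𝓝[>] 0) (𝓝 (u x t - v x t - 0 * t)) :=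
    (Continuous.tendsto (by fun_prop) 0).mono_left nhdsWithin_le_nhds
  have hle := le_of_tendsto hlim (eventually_mem_nhdsWithin.mono hperturbed)
  linarith

theorem le_const_of_parabolicOp_nonpos (hΩ : IsOpen Ω) (hΩb : Bornology.IsBounded Ω) (hε : 0 ≤ ε)
    (hA : ∀ x ∈ Ω, ∀ t > 0, (A x t).PosSemidef) (hu : ParabolicRegular u Ω T)
    (hop : ∀ x ∈ Ω, ∀ t : ℝ, 0 < t → ENNReal.ofReal t < T → parabolicOp ε A b u x t ≤ 0)
    {C : ℝ} (hinit : ∀ x ∈ closure Ω, u x 0 ≤ C)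
    (hlat : ∀ x ∈ frontier Ω, ∀ t : ℝ, 0 < t → ENNReal.ofReal t < T → u x t ≤ C) :
    ∀ x ∈ closure Ω, ∀ t : ℝ, 0 ≤ t → ENNReal.ofReal t < T → u x t ≤ C := by
  refine le_of_parabolicOp_le (b := b) (v := fun _ _ => C) hΩ hΩb hε hA hu
    (.of_contDiff contDiff_const) (fun x hx t ht htT => ?_) hinit hlat
  rw [parabolicOp_of_time, deriv_const]
  exact hop x hx t ht htT

end Comparison

section Barrier

/-- The function `c + η t + m exp (κ |x|²)`, used as a supersolution near the origin. -/
def expBarrier (c η m κ : ℝ) (x : Eu n) (t : ℝ) : ℝ := c + η * t + m * Real.exp (κ * ‖x‖ ^ 2)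

variable {c η m κ ε θ : ℝ}

lemma parabolicRegular_expBarrier {Ω : Set (Eu n)} {T : ℝ≥0∞} :
    ParabolicRegular (expBarrier c η m κ) Ω T := by
  refine .of_contDiff ?_
  have hnorm : ContDiff ℝ 2 fun p : Eu n × ℝ => ‖p.1‖ ^ 2 := contDiff_fst.norm_sq ℝ
  unfold expBarrier
  fun_prop

lemma tD_expBarrier (x : Eu n) (t : ℝ) : tD (expBarrier c η m κ) x t = η := by
  unfold tD expBarrier
  simp

lemma hasFDerivAt_exp_norm_sq {E : Type*} [NormedAddCommGroup E] [InnerProductSpace ℝ E] (κ : ℝ)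
    (x : E) : HasFDerivAt (fun y : E => Real.exp (κ * ‖y‖ ^ 2))
      ((2 * κ * Real.exp (κ * ‖x‖ ^ 2)) • innerSL ℝ x) x := by
  refine ((hasStrictFDerivAt_norm_sq x).hasFDerivAt.const_mul κ).exp.congr_fderiv ?_
  module

lemma sG_expBarrier (x : Eu n) (t : ℝ) :
    sG (expBarrier c η m κ) x t = (m * (2 * κ * Real.exp (κ * ‖x‖ ^ 2))) • x := by
  refine HasGradientAt.gradient (hasGradientAt_iff_hasFDerivAt.2 ?_)
  refine (((hasFDerivAt_exp_norm_sq κ x).const_mul m).const_add (c + η * t)).congr_fderiv ?_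
  ext p
  simp [mul_assoc]

lemma sH_expBarrier (x : Eu n) (t : ℝ) :
    sH (expBarrier c η m κ) x t = (m * Real.exp (κ * ‖x‖ ^ 2)) •
      ((4 * κ ^ 2) • Matrix.vecMulVec x x + (2 * κ) • (1 : Matrix (Fin n) (Fin n) ℝ)) := by
  ext i j
  have hcoord : HasFDerivAt (fun y : Eu n => y i) (EuclideanSpace.proj i : Eu n →L[ℝ] ℝ) x :=
    (EuclideanSpace.proj i : Eu n →L[ℝ] ℝ).hasFDerivAt
  have hgrad := (((hasFDerivAt_exp_norm_sq κ x).const_mul (2 * κ)).const_mul m).fun_mul hcoord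
  simp only [sH, sG_expBarrier, PiLp.smul_apply, smul_eq_mul]
  rw [hgrad.fderiv]
  simp only [Matrix.smul_apply, Matrix.add_apply, Matrix.vecMulVec_apply, Matrix.one_apply,
    add_apply, smul_apply, smul_eq_mul, innerSL_apply_apply, EuclideanSpace.inner_single_right,
    conj_trivial, one_mul, PiLp.proj_apply, PiLp.single_apply]
  ring

lemma parabolicOp_expBarrier (A : Eu n → ℝ → Matrix (Fin n) (Fin n) ℝ) (b : Eu n → Eu n)
    (x : Eu n) (t : ℝ) :
    parabolicOp ε A b (expBarrier c η m κ) x t = η - m * Real.exp (κ * ‖x‖ ^ 2) *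
      (ε * (4 * κ ^ 2 * mquad (A x t) x + 2 * κ * (A x t).trace) + 2 * κ * dotp (b x) x) := by
  have hgrad : dotp (b x) (sG (expBarrier c η m κ) x t) =
      m * (2 * κ * Real.exp (κ * ‖x‖ ^ 2)) * dotp (b x) x := by
    rw [sG_expBarrier, dotp_eq_inner, dotp_eq_inner, inner_smul_right]
  rw [parabolicOp, tD_expBarrier, hgrad, sH_expBarrier, trMul_eq_trace_mul, Matrix.mul_smul,
    Matrix.mul_add, Matrix.mul_smul, Matrix.mul_smul, Matrix.trace_smul, Matrix.trace_add,
    Matrix.trace_smul, Matrix.trace_smul, ← trMul_eq_trace_mul, trMul_vecMulVec_self, mul_one]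
  simp only [smul_eq_mul]
  ring

lemma exp_mul_sub_le (z N : ℝ) : Real.exp z * (N - z) ≤ Real.exp (N - 1) := by
  calc Real.exp z * (N - z) ≤ Real.exp z * Real.exp (N - 1 - z) := by
        gcongr
        linarith [Real.add_one_le_exp (N - 1 - z)]
    _ = Real.exp (N - 1) := by rw [← Real.exp_add]; ring_nf

lemma parabolicOp_expBarrier_nonneg {b₀ : ℝ} {A : Eu n → ℝ → Matrix (Fin n) (Fin n) ℝ}
    {b : Eu n → Eu n} {x : Eu n} {t : ℝ} (hε : 0 < ε) (hθ : 0 < θ) (hb₀ : 0 ≤ b₀) (hm : 0 ≤ m)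
    (hA : memS θ (A x t)) (hb : dotp (b x) x ≤ -b₀ * ‖x‖ ^ 2) :
    0 ≤ parabolicOp ε A b
      (expBarrier c (m * b₀ * Real.exp (n / 2 - 1)) m (b₀ * θ / (4 * ε))) x t := by
  set κ := b₀ * θ / (4 * ε) with hκ
  have : 0 ≤ κ := by positivity
  have hκθ : ε * κ * θ⁻¹ = b₀ / 4 := by
    rw [hκ]
    field_simp
  have hquad : mquad (A x t) x ≤ θ⁻¹ * ‖x‖ ^ 2 := (hA.2 x).2
  have hgen : ε * (4 * κ ^ 2 * mquad (A x t) x + 2 * κ * (A x t).trace) + 2 * κ * dotp (b x) x ≤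
      b₀ * (n / 2 - κ * ‖x‖ ^ 2) :=
    calc ε * (4 * κ ^ 2 * mquad (A x t) x + 2 * κ * (A x t).trace) + 2 * κ * dotp (b x) x
      _ ≤ ε * (4 * κ ^ 2 * (θ⁻¹ * ‖x‖ ^ 2) + 2 * κ * (n * θ⁻¹)) +
          2 * κ * (-b₀ * ‖x‖ ^ 2) := by
        gcongr
        exact hA.trace_le
      _ = b₀ * (n / 2 - κ * ‖x‖ ^ 2) := by
        linear_combination (4 * κ * ‖x‖ ^ 2 + 2 * n) * hκθ
  rw [parabolicOp_expBarrier, sub_nonneg]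
  calc m * Real.exp (κ * ‖x‖ ^ 2) *
        (ε * (4 * κ ^ 2 * mquad (A x t) x + 2 * κ * (A x t).trace) + 2 * κ * dotp (b x) x)
    _ ≤ m * Real.exp (κ * ‖x‖ ^ 2) * (b₀ * (n / 2 - κ * ‖x‖ ^ 2)) := by gcongr
    _ = m * b₀ * (Real.exp (κ * ‖x‖ ^ 2) * (n / 2 - κ * ‖x‖ ^ 2)) := by ring
    _ ≤ m * b₀ * Real.exp (n / 2 - 1) := by
      gcongr
      exact exp_mul_sub_le _ _

end Barrier

section MetastableEstimates

variable {ε θ b₀ r c M : ℝ} {A : Eu n → ℝ → Matrix (Fin n) (Fin n) ℝ} {b : Eu n → Eu n}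
  {u : Eu n → ℝ → ℝ}

theorem apply_zero_le_of_parabolicOp_nonpos {T : ℝ≥0∞} (hε : 0 < ε) (hθ : 0 < θ) (hb₀ : 0 ≤ b₀)
    (hr : 0 < r) (hM : 0 ≤ M) (hA : ∀ x ∈ ball (0 : Eu n) r, ∀ t > 0, memS θ (A x t))
    (hb : ∀ x ∈ ball (0 : Eu n) r, dotp (b x) x ≤ -b₀ * ‖x‖ ^ 2)
    (hu : ParabolicRegular u (ball 0 r) T)
    (hop : ∀ x ∈ ball (0 : Eu n) r, ∀ t : ℝ, 0 < t → ENNReal.ofReal t < T →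
      parabolicOp ε A b u x t ≤ 0)
    (hinit : ∀ x ∈ closedBall (0 : Eu n) r, u x 0 ≤ c)
    (hlat : ∀ x ∈ sphere (0 : Eu n) r, ∀ t : ℝ, 0 < t → ENNReal.ofReal t < T → u x t ≤ c + M)
    {t : ℝ} (ht : 0 ≤ t) (htT : ENNReal.ofReal t < T) :
    u 0 t ≤ c + M * Real.exp (-(b₀ * θ / (4 * ε) * r ^ 2)) *
      (1 + b₀ * Real.exp (n / 2 - 1) * t) := by
  set κ := b₀ * θ / (4 * ε)
  set m := M * Real.exp (-(κ * r ^ 2)) with hm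
  set η := m * b₀ * Real.exp (n / 2 - 1) with hη
  have hm₀ : 0 ≤ m := by positivity
  have hη₀ : 0 ≤ η := by positivity
  have hinit' : ∀ x ∈ closure (ball (0 : Eu n) r), u x 0 ≤ expBarrier c η m κ x 0 := by
    intro x hx
    have hux := hinit x (closure_ball_subset_closedBall hx)
    have hexp : 0 ≤ m * Real.exp (κ * ‖x‖ ^ 2) := by positivity
    simp only [expBarrier]
    linarith
  have hlat' : ∀ x ∈ frontier (ball (0 : Eu n) r), ∀ s : ℝ, 0 < s → ENNReal.ofReal s < T →
      u x s ≤ expBarrier c η m κ x s := by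
    intro x hx s hs hsT
    have hxr : x ∈ sphere (0 : Eu n) r := frontier_ball_subset_sphere hx
    have hexp : m * Real.exp (κ * ‖x‖ ^ 2) = M := by
      rw [mem_sphere_zero_iff_norm.1 hxr, hm, mul_assoc, ← Real.exp_add, neg_add_cancel,
        Real.exp_zero, mul_one]
    rw [expBarrier, hexp]
    linarith [hlat x hxr s hs hsT, mul_nonneg hη₀ hs.le]
  have hcompare := le_of_parabolicOp_le isOpen_ball isBounded_ball hε.le
    (fun x hx s hs => (hA x hx s hs).posSemidef hθ.le) hu parabolicRegular_expBarrier
    (fun x hx s hs hsT => (hop x hx s hs hsT).trans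
      (parabolicOp_expBarrier_nonneg hε hθ hb₀ hm₀ (hA x hx s hs) (hb x hx)))
    hinit' hlat' 0 (subset_closure (mem_ball_self hr)) t ht htT
  calc u 0 t ≤ expBarrier c η m κ 0 t := hcompare
    _ = c + m * (1 + b₀ * Real.exp (n / 2 - 1) * t) := by
      simp only [expBarrier, hη, norm_zero, zero_pow two_ne_zero, mul_zero, Real.exp_zero]
      ring

variable {Ω : Set (Eu n)} {g : Eu n → ℝ} {G δ : ℝ} {T : ℝ≥0∞}

theorem apply_zero_sub_le_of_parabolicOp_nonpos (hε : 0 < ε) (hθ : 0 < θ) (hb₀ : 0 ≤ b₀)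
    (hr : 0 < r) (hΩ : IsOpen Ω) (hΩb : Bornology.IsBounded Ω)
    (hball : closedBall 0 r ⊆ Ω) (hA : ∀ x ∈ Ω, ∀ t > 0, memS θ (A x t))
    (hb : ∀ x ∈ ball (0 : Eu n) r, dotp (b x) x ≤ -b₀ * ‖x‖ ^ 2)
    (hu : ParabolicRegular u Ω T)
    (hop : ∀ x ∈ Ω, ∀ t : ℝ, 0 < t → ENNReal.ofReal t < T → parabolicOp ε A b u x t ≤ 0)
    (hinit : ∀ x ∈ closure Ω, u x 0 = g x)
    (hlat : ∀ x ∈ frontier Ω, ∀ t : ℝ, 0 < t → ENNReal.ofReal t < T → u x t = g x)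
    (hG : ∀ x ∈ closure Ω, |g x| ≤ G) (hg : ∀ x ∈ closedBall 0 r, |g x - g 0| ≤ δ)
    {t : ℝ} (ht : 0 ≤ t) (htT : ENNReal.ofReal t < T) :
    u 0 t - g 0 ≤ δ + 2 * G * Real.exp (-(b₀ * θ / (4 * ε) * r ^ 2)) *
      (1 + b₀ * Real.exp (n / 2 - 1) * t) := by
  have hball' : closedBall 0 r ⊆ closure Ω := hball.trans subset_closure
  have hδ : 0 ≤ δ := (abs_nonneg _).trans (hg 0 (mem_closedBall_self hr.le))
  have hG₀ : |g 0| ≤ G := hG 0 (hball' (mem_closedBall_self hr.le))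
  have hbound : ∀ x ∈ closure Ω, ∀ s : ℝ, 0 ≤ s → ENNReal.ofReal s < T → u x s ≤ G :=
    le_const_of_parabolicOp_nonpos hΩ hΩb hε.le (fun x hx s hs => (hA x hx s hs).posSemidef hθ.le)
      hu hop (fun x hx => (hinit x hx).trans_le (le_of_abs_le (hG x hx)))
      fun x hx s hs hsT =>
        (hlat x hx s hs hsT).trans_le (le_of_abs_le (hG x (frontier_subset_closure hx)))
  have hsub : ball 0 r ⊆ Ω := ball_subset_closedBall.trans hball
  have hzero := apply_zero_le_of_parabolicOp_nonpos (c := g 0 + δ) (M := 2 * G) hε hθ hb₀ hr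
    (by linarith [abs_nonneg (g 0)]) (fun x hx => hA x (hsub hx)) hb (hu.mono hsub)
    (fun x hx => hop x (hsub hx))
    (fun x hx => by linarith [hinit x (hball' hx), le_of_abs_le (hg x hx)])
    (fun x hx s hs hsT => by
      linarith [hbound x (hball' (sphere_subset_closedBall hx)) s hs.le hsT, neg_le_of_abs_le hG₀])
    ht htT
  linarith

theorem abs_apply_zero_sub_le_of_parabolicOp_eq_zero (hε : 0 < ε) (hθ : 0 < θ) (hb₀ : 0 ≤ b₀)
    (hr : 0 < r) (hΩ : IsOpen Ω) (hΩb : Bornology.IsBounded Ω)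
    (hball : closedBall 0 r ⊆ Ω) (hA : ∀ x ∈ Ω, ∀ t > 0, memS θ (A x t))
    (hb : ∀ x ∈ ball (0 : Eu n) r, dotp (b x) x ≤ -b₀ * ‖x‖ ^ 2)
    (hu : ParabolicRegular u Ω T)
    (hop : ∀ x ∈ Ω, ∀ t : ℝ, 0 < t → ENNReal.ofReal t < T → parabolicOp ε A b u x t = 0)
    (hinit : ∀ x ∈ closure Ω, u x 0 = g x)
    (hlat : ∀ x ∈ frontier Ω, ∀ t : ℝ, 0 < t → ENNReal.ofReal t < T → u x t = g x)
    (hG : ∀ x ∈ closure Ω, |g x| ≤ G) (hg : ∀ x ∈ closedBall 0 r, |g x - g 0| ≤ δ)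
    {t : ℝ} (ht : 0 ≤ t) (htT : ENNReal.ofReal t < T) :
    |u 0 t - g 0| ≤ δ + 2 * G * Real.exp (-(b₀ * θ / (4 * ε) * r ^ 2)) *
      (1 + b₀ * Real.exp (n / 2 - 1) * t) := by
  have hupper := apply_zero_sub_le_of_parabolicOp_nonpos hε hθ hb₀ hr hΩ hΩb hball hA hb hu
    (fun x hx s hs hsT => (hop x hx s hs hsT).le) hinit hlat hG hg ht htT
  have hconst : ParabolicRegular (fun (_ : Eu n) _ => (0 : ℝ)) Ω T := .of_contDiff contDiff_const
  have hlower := apply_zero_sub_le_of_parabolicOp_nonpos (u := fun x t => 0 - u x t)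
    (g := fun x => 0 - g x) hε hθ hb₀ hr hΩ hΩb hball hA hb (hconst.sub hu)
    (fun x hx s hs hsT => by
      rw [hconst.parabolicOp_sub hu hx hs hsT, hop x hx s hs hsT, parabolicOp_of_time, deriv_const,
        sub_zero])
    (fun x hx => by rw [hinit x hx]) (fun x hx s hs hsT => by rw [hlat x hx s hs hsT])
    (fun x hx => by rw [zero_sub, abs_neg]; exact hG x hx)
    (fun x hx => by rw [sub_sub_sub_cancel_left, abs_sub_comm]; exact hg x hx) ht htT
  exact abs_le.2 ⟨by linarith, hupper⟩

end MetastableEstimates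

lemma exists_forall_mul_exp_neg_mul_le {lam δ C K : ℝ} (hlam : 0 < lam) (hδ : 0 < δ) (hC : 0 ≤ C)
    (hK : 0 ≤ K) : ∃ ε₀ ∈ Ioo (0 : ℝ) 1, ∀ ε ∈ Ioo 0 ε₀, ∀ t ≤ Real.exp (lam / ε),
      C * Real.exp (-(2 * (lam / ε))) * (1 + K * t) ≤ δ := by
  have hlim : Tendsto (fun ε => C * (1 + K) * Real.exp (-(lam / ε))) (𝓝[>] 0) (𝓝 0) := by
    have hdiv : Tendsto (fun ε => lam / ε) (𝓝[>] 0) atTop :=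
      tendsto_inv_nhdsGT_zero.const_mul_atTop hlam
    simpa using (Real.tendsto_exp_neg_atTop_nhds_zero.comp hdiv).const_mul (C * (1 + K))
  obtain ⟨ε₀, hε₀, hsmall⟩ := (mem_nhdsGT_iff_exists_Ioo_subset' (zero_lt_one' ℝ)).1
    (hlim.eventually_le_const hδ)
  refine ⟨min ε₀ (1 / 2), ⟨lt_min hε₀ (by norm_num), min_lt_of_right_lt (by norm_num)⟩, ?_⟩
  intro ε hε t ht
  have hone : 1 ≤ Real.exp (lam / ε) := Real.one_le_exp (div_pos hlam hε.1).le
  calc C * Real.exp (-(2 * (lam / ε))) * (1 + K * t)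
    _ ≤ C * Real.exp (-(2 * (lam / ε))) * (Real.exp (lam / ε) + K * Real.exp (lam / ε)) := by
      gcongr
    _ = C * (1 + K) * (Real.exp (-(2 * (lam / ε))) * Real.exp (lam / ε)) := by ring
    _ = C * (1 + K) * Real.exp (-(lam / ε)) := by
      rw [← Real.exp_add]
      ring_nf
    _ ≤ δ := hsmall ⟨hε.1, hε.2.trans_le (min_le_left _ _)⟩

lemma exists_forall_closedBall_abs_sub_le {Ω : Set (Eu n)} {g : Eu n → ℝ} {r₀ δ : ℝ}
    (hg : ContinuousOn g (closure Ω)) (hr₀ : 0 < r₀) (hball : ball 0 r₀ ⊆ Ω) (hδ : 0 < δ) :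
    ∃ r > 0, closedBall 0 r ⊆ ball (0 : Eu n) r₀ ∧ ∀ x ∈ closedBall 0 r, |g x - g 0| ≤ δ := by
  have hnhds : ball (0 : Eu n) r₀ ∈ 𝓝 0 := ball_mem_nhds 0 hr₀
  have hg₀ : ContinuousAt g 0 :=
    hg.continuousAt (mem_of_superset hnhds (hball.trans subset_closure))
  obtain ⟨r, hr, hsub⟩ := nhds_basis_closedBall.mem_iff.1
    (inter_mem hnhds (hg₀ (closedBall_mem_nhds (g 0) hδ)))
  exact ⟨r, hr, hsub.trans inter_subset_left, fun x hx => (hsub hx).2⟩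

theorem stmt17_general {Ω : Set (Eu n)} {g : Eu n → ℝ} {b : Eu n → Eu n} {θ b₀ r₀ δ : ℝ}
    (hΩ : IsOpen Ω) (hΩb : Bornology.IsBounded Ω) (hg : ContinuousOn g (closure Ω)) (hθ : 0 < θ)
    (hb₀ : 0 < b₀) (hr₀ : 0 < r₀) (hball : ball 0 r₀ ⊆ Ω)
    (hb : ∀ x ∈ ball (0 : Eu n) r₀, dotp (b x) x ≤ -b₀ * ‖x‖ ^ 2) (hδ : 0 < δ) :
    ∃ lam > 0, ∃ ε₀ ∈ Ioo (0 : ℝ) 1, ∀ ε ∈ Ioo 0 ε₀,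
      ∀ (A : Eu n → ℝ → Matrix (Fin n) (Fin n) ℝ) (u : Eu n → ℝ → ℝ),
        (∀ x ∈ Ω, ∀ t > 0, memS θ (A x t)) → ParabolicRegular u Ω ⊤ → SolveL ε A b u Ω ⊤ →
        (∀ x ∈ closure Ω, u x 0 = g x) → (∀ x ∈ frontier Ω, ∀ t > 0, u x t = g x) →
        ∀ t ∈ Icc 0 (Real.exp (lam / ε)), |u 0 t - g 0| ≤ δ := by
  obtain ⟨G, hG⟩ := hΩb.isCompact_closure.exists_bound_of_continuousOn hg
  obtain ⟨r, hr, hrr₀, hgr⟩ := exists_forall_closedBall_abs_sub_le hg hr₀ hball (half_pos hδ)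
  have hG₀ : 0 ≤ G := (norm_nonneg _).trans (hG 0 (subset_closure (hball (mem_ball_self hr₀))))
  obtain ⟨ε₀, hε₀, hsmall⟩ := exists_forall_mul_exp_neg_mul_le (lam := b₀ * θ * r ^ 2 / 8)
    (C := 2 * G) (K := b₀ * Real.exp (n / 2 - 1)) (by positivity) (half_pos hδ) (by positivity)
    (by positivity)
  refine ⟨b₀ * θ * r ^ 2 / 8, by positivity, ε₀, hε₀, ?_⟩
  intro ε hε A u hA hu hsol hinit hlat t ht
  have hestimate := abs_apply_zero_sub_le_of_parabolicOp_eq_zero hε.1 hθ hb₀.le hr hΩ hΩb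
    (hrr₀.trans hball) hA (fun x hx => hb x (hrr₀ (ball_subset_closedBall hx))) hu
    (fun x hx s hs hsT => hsol.parabolicOp_eq_zero hx hs hsT) hinit
    (fun x hx s hs _ => hlat x hx s hs) hG hgr ht.1 ENNReal.ofReal_lt_top
  have hexponent : b₀ * θ / (4 * ε) * r ^ 2 = 2 * (b₀ * θ * r ^ 2 / 8 / ε) := by ring
  rw [hexponent] at hestimate
  linarith [hsmall ε hε t ht.2]

/-- Lemma 6.1: `u^ε(0,t)` stays near `g(0)` up to some exponential time. -/
theorem stmt17 {n : ℕ} (S : SettingB n) (u : ℝ → Eu n → ℝ → ℝ)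
    (hu : ∀ ε ∈ Set.Ioo (0:ℝ) 1, S.SolvesQL ε (u ε) ∧ S.BC (u ε))
    (δ : ℝ) (hδ : 0 < δ) :
    ∃ lam0 > (0:ℝ), ∃ ε₀ ∈ Set.Ioo (0:ℝ) 1, ∀ ε ∈ Set.Ioo (0:ℝ) ε₀,
      ∀ t ∈ Set.Icc (0:ℝ) (Real.exp (lam0 / ε)), |u ε 0 t - S.g 0| ≤ δ := by
  obtain ⟨lam0, hlam0, ε₀, hε₀, hclose⟩ := stmt17_general S.domain.1 S.domain.2.1 S.g_cont
    S.θ₀_mem.1 S.b₀_pos S.r₀_pos (ball_subset_closedBall.trans S.ball_sub) S.b_coerc hδ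
  refine ⟨lam0, hlam0, ε₀, hε₀, fun ε hε => ?_⟩
  obtain ⟨⟨hreg, hsol⟩, hinit, hlat⟩ := hu ε ⟨hε.1, hε.2.trans hε₀.2⟩
  exact hclose ε hε _ (u ε) (fun x hx _ _ => S.a_mem x (subset_closure hx) _)
    hreg.parabolicRegular hsol hinit hlat
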